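/- Let R be a commutative Noetherian ring and M a finitely generated R-module. Then ca_R(M) equals the annihilator of M in the singularity category, i.e. ca_R(M) = {r ∈ R : r · id_M = 0 in Hom_{D_sg(R)}(M,M)}, where D_sg(R) is the Verdier quotient of the bounded derived category of finitely generated modules by perfect complexes. -/

import Mathlib

open CategoryTheory

noncomputable section

universe u

variable (R : Type u) [CommRing R]

/-- The `n`-th Ext group of two `R`-modules, as an `R`-module. -/
abbrev ExtM (n : ℕ) (M N : ModuleCat.{u} R) : ModuleCat.{u} R :=
  ((Ext R (ModuleCat.{u} R) n).obj (Opposite.op M)).obj N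

/-- The `n`-th cohomological annihilator of a module `M`:
elements `r` with `r • Ext^i(M, N) = 0` for all `i ≥ n` and all finitely generated `N`. -/
def caN (n : ℕ) (M : ModuleCat.{u} R) : Ideal R where
  carrier := {r | ∀ i, n ≤ i → ∀ N : ModuleCat.{u} R, Module.Finite R N →
    ∀ x : ExtM R i M N, r • x = 0}
  zero_mem' := by intro i _ N _ x; simp
  add_mem' := by
    intro a b ha hb i hi N hN x
    rw [add_smul, ha i hi N hN x, hb i hi N hN x, add_zero]
  smul_mem' := by
    intro c r hr i hi N hN x
    simp only [smul_eq_mul, mul_smul, hr i hi N hN x, smul_zero]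

/-- The cohomological annihilator `ca_R(M) = ⋃ₙ ca_R^n(M)`. -/
def ca (M : ModuleCat.{u} R) : Set R := ⋃ n : ℕ, (caN R n M : Set R)

/-- The `n`-th co-cohomological annihilator of a module `M`. -/
def cocaN (n : ℕ) (M : ModuleCat.{u} R) : Ideal R where
  carrier := {r | ∀ i, n ≤ i → ∀ N : ModuleCat.{u} R, Module.Finite R N →
    ∀ x : ExtM R i N M, r • x = 0}
  zero_mem' := by intro i _ N _ x; simp
  add_mem' := by
    intro a b ha hb i hi N hN x
    rw [add_smul, ha i hi N hN x, hb i hi N hN x, add_zero]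
  smul_mem' := by
    intro c r hr i hi N hN x
    simp only [smul_eq_mul, mul_smul, hr i hi N hN x, smul_zero]

/-- The co-cohomological annihilator `coca_R(M) = ⋃ₙ coca_R^n(M)`. -/
def coca (M : ModuleCat.{u} R) : Set R := ⋃ n : ℕ, (cocaN R n M : Set R)

/-- `M` has projective dimension at most `n`: `Ext^i(M, -) = 0` for all `i > n`. -/
def projDimLE (n : ℕ) (M : ModuleCat.{u} R) : Prop :=
  ∀ i : ℕ, n < i → ∀ N : ModuleCat.{u} R, Subsingleton (ExtM R i M N)

/-- `M` has injective dimension at most `n`: `Ext^i(-, M) = 0` for all `i > n`. -/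
def injDimLE (n : ℕ) (M : ModuleCat.{u} R) : Prop :=
  ∀ i : ℕ, n < i → ∀ N : ModuleCat.{u} R, Subsingleton (ExtM R i N M)

/-- `K` is an `n`-th syzygy of `M` with respect to resolutions by
finitely generated projective modules. -/
def IsSyz : ℕ → ModuleCat.{u} R → ModuleCat.{u} R → Prop
  | 0, M, K => Nonempty (K ≃ₗ[R] M)
  | n + 1, M, K => ∃ (L P : ModuleCat.{u} R), IsSyz n M L ∧
      Module.Finite R P ∧ Module.Projective R P ∧
      ∃ f : P →ₗ[R] L, Function.Surjective f ∧ Nonempty (K ≃ₗ[R] LinearMap.ker f)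

/-- `X` is a direct summand of `Y`. -/
def IsSummand (X Y : ModuleCat.{u} R) : Prop :=
  ∃ (i : X →ₗ[R] Y) (p : Y →ₗ[R] X), p.comp i = LinearMap.id

/-- `X` is a direct summand of a finite direct sum of copies of `G`. -/
def IsSummandOfCopies (G X : ModuleCat.{u} R) : Prop :=
  ∃ k : ℕ, IsSummand R X (ModuleCat.of R (Fin k → G))

/-- The subcategories `thickⁿ(G)` of `mod R`. -/
def thickN (G : ModuleCat.{u} R) : ℕ → Set (ModuleCat.{u} R)
  | 0 => {X | Subsingleton X}
  | n + 1 => {X | ∃ (Y Y₁ Y₂ : ModuleCat.{u} R) (f : Y₁ →ₗ[R] Y) (g : Y →ₗ[R] Y₂),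
      Function.Injective f ∧ Function.Surjective g ∧ LinearMap.ker g = LinearMap.range f ∧
      ((Y₁ ∈ thickN G n ∧ IsSummandOfCopies R G Y₂) ∨
        (IsSummandOfCopies R G Y₁ ∧ Y₂ ∈ thickN G n)) ∧
      IsSummand R X Y}

/-- The balls `|G|ₙ` of Dao–Takahashi. -/
def ballN (G : ModuleCat.{u} R) : ℕ → Set (ModuleCat.{u} R)
  | 0 => {X | Subsingleton X}
  | n + 1 => {Y | ∃ (Y' Y₁ Y₂ : ModuleCat.{u} R)
      (f : Y₁ →ₗ[R] (ModuleCat.of R (Y × Y'))) (g : (ModuleCat.of R (Y × Y')) →ₗ[R] Y₂),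
      Function.Injective f ∧ Function.Surjective g ∧ LinearMap.ker g = LinearMap.range f ∧
      Y₁ ∈ ballN G n ∧ IsSummandOfCopies R G Y₂}

/-- A regular local ring: a Noetherian local ring whose maximal ideal can be
generated by `dim R` elements. -/
def IsRegularLocal (A : Type u) [CommRing A] [IsLocalRing A] : Prop :=
  IsNoetherianRing A ∧ ∃ s : Finset A, Ideal.span (↑s : Set A) = IsLocalRing.maximalIdeal A ∧
    (s.card : WithBot ℕ∞) = ringKrullDim A

/-- The localization of a module at a prime, as a module category object over the local ring. -/
abbrev locMod (p : PrimeSpectrum R) (M : ModuleCat.{u} R) :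
    ModuleCat.{u} (Localization.AtPrime p.asIdeal) :=
  ModuleCat.of (Localization.AtPrime p.asIdeal) (LocalizedModule p.asIdeal.primeCompl M)

/-- Depth of a module over a local ring, via vanishing of `Ext` from the residue field. -/
def depthE (A : Type u) [CommRing A] [IsLocalRing A] (N : ModuleCat.{u} A) : ℕ∞ :=
  sInf ((fun n : ℕ => (n : ℕ∞)) ''
    {n : ℕ | ¬ Subsingleton (ExtM A n (ModuleCat.of A (IsLocalRing.ResidueField A)) N)})

/-- The large restricted flat dimension of `M`. -/
def rfdE (M : ModuleCat.{u} R) : ℕ∞ :=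
  ⨆ p : PrimeSpectrum R,
    (depthE (Localization.AtPrime p.asIdeal)
        (ModuleCat.of (Localization.AtPrime p.asIdeal) (Localization.AtPrime p.asIdeal)) -
      depthE (Localization.AtPrime p.asIdeal) (locMod R p M))

/-- `r • f` factors through a finitely generated projective module. -/
def FactorsThroughProj (M : ModuleCat.{u} R) (f : M →ₗ[R] M) : Prop :=
  ∃ P : ModuleCat.{u} R, Module.Projective R P ∧ Module.Finite R P ∧
    ∃ (g : M →ₗ[R] P) (h : P →ₗ[R] M), h.comp g = f

/-- The annihilator of the stable endomorphism ring of `M`. -/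
def annStableEnd (M : ModuleCat.{u} R) : Set R :=
  {r | ∀ f : M →ₗ[R] M, FactorsThroughProj R M (r • f)}

/-- A resolving subcategory of `mod R`. -/
def IsResolving (C : Set (ModuleCat.{u} R)) : Prop :=
  (∀ P : ModuleCat.{u} R, Module.Finite R P → Module.Projective R P → P ∈ C) ∧
  (∀ X Y : ModuleCat.{u} R, Y ∈ C → IsSummand R X Y → X ∈ C) ∧
  (∀ (Y Y₁ Y₂ : ModuleCat.{u} R) (f : Y₁ →ₗ[R] Y) (g : Y →ₗ[R] Y₂),
    Function.Injective f → Function.Surjective g → LinearMap.ker g = LinearMap.range f →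
    Y₁ ∈ C → Y₂ ∈ C → Y ∈ C) ∧
  (∀ X ∈ C, ∀ K : ModuleCat.{u} R, IsSyz R 1 X K → K ∈ C)

/-- The smallest resolving subcategory containing `G`. -/
def resCl (G : ModuleCat.{u} R) : Set (ModuleCat.{u} R) :=
  ⋂₀ {C | IsResolving R C ∧ G ∈ C}

end

attribute [local instance] HasDerivedCategory.standard

noncomputable section

/-- An object of the derived category is perfect if it is isomorphic to a bounded
complex of finitely generated projective modules. -/
def IsPerfect {R : Type u} [CommRing R] (X : DerivedCategory (ModuleCat.{u} R)) : Prop :=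
  ∃ K : CochainComplex (ModuleCat.{u} R) ℤ,
    (∀ i : ℤ, Module.Finite R (K.X i) ∧ Module.Projective R (K.X i)) ∧
    (∃ a b : ℤ, ∀ i : ℤ, (i < a ∨ b < i) → Subsingleton (K.X i)) ∧
    Nonempty (DerivedCategory.Q.obj K ≅ X)


open CategoryTheory Limits

lemma homology_ann_iff {R : Type u} [CommRing R] (S : ShortComplex (ModuleCat.{u} R)) (r : R) :
    (∀ x : S.homology, r • x = 0) ↔ ∀ z : S.X₂, S.g z = 0 → ∃ y : S.X₁, S.f y = r • z := by
  constructor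
  · intro h z hz
    let z' := S.moduleCatCyclesIso.inv ⟨z, hz⟩
    have hz' : S.iCycles z' = z := by
      have := S.moduleCatCyclesIso_inv_iCycles
      exact congrArg (fun f => f.hom (⟨z, hz⟩ : LinearMap.ker S.g.hom)) this
    have h2 := h (S.homologyπ z')
    rw [← map_smul] at h2
    have hex := (ShortComplex.moduleCat_exact_iff _).1
      (ShortComplex.exact_of_g_is_cokernel (ShortComplex.mk S.toCycles S.homologyπ (by simp))
        S.homologyIsCokernel)
    obtain ⟨y, hy⟩ := hex _ h2
    refine ⟨y, ?_⟩
    have h3 := congrArg (fun w => S.iCycles w) hy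
    rw [← S.toCycles_i]
    refine Eq.trans h3 ?_
    rw [map_smul, hz']
  · intro h x
    obtain ⟨z, rfl⟩ := (ModuleCat.epi_iff_surjective S.homologyπ).1 inferInstance x
    obtain ⟨y, hy⟩ := h (S.iCycles z) (by
      have := congrArg (fun f => f.hom z) S.iCycles_g
      exact this)
    have : S.toCycles y = r • z := by
      apply (ModuleCat.mono_iff_injective S.iCycles).1 inferInstance
      rw [map_smul, ← hy, ← S.toCycles_i]
      rfl
    rw [← map_smul, ← this]
    exact congrArg (fun f => f.hom y) S.toCycles_comp_homologyπ

lemma ext_ann_iff {R : Type u} [CommRing R] {M N : ModuleCat.{u} R} (P : ProjectiveResolution M)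
    (r : R) (p : ℕ) :
    (∀ x : ExtM R (p+1) M N, r • x = 0) ↔
      ∀ c : P.complex.X (p+1) ⟶ N, P.complex.d (p+2) (p+1) ≫ c = 0 →
        ∃ h : P.complex.X p ⟶ N, P.complex.d (p+1) p ≫ h = r • c := by
  let K := P.complex.linearYonedaObj R N
  let e := (P.isoExt (R := R) (p+1) N ≪≫
    (ShortComplex.homologyMapIso (K.isoSc' p (p+1) (p+2) (by simp) (by simp)))).toLinearEquiv
  have h1 : (∀ x : ExtM R (p+1) M N, r • x = 0) ↔
      ∀ x : (K.sc' p (p+1) (p+2)).homology, r • x = 0 := by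
    constructor
    · intro h x
      apply e.symm.injective
      rw [map_smul, h, map_zero]
    · intro h x
      apply e.injective
      rw [map_smul, h, map_zero]
  rw [h1, homology_ann_iff]
  rfl

/-- f.g. free cover rank -/
def fgRank {R : Type u} [CommRing R] (M : ModuleCat.{u} R) [Module.Finite R M] : ℕ :=
  (Module.Finite.exists_fin' R M).choose

def fgCov {R : Type u} [CommRing R] (M : ModuleCat.{u} R) [Module.Finite R M] :
    (Fin (fgRank M) → R) →ₗ[R] M :=
  (Module.Finite.exists_fin' R M).choose_spec.choose

lemma fgCov_surj {R : Type u} [CommRing R] (M : ModuleCat.{u} R) [Module.Finite R M] :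
    Function.Surjective (fgCov M) :=
  (Module.Finite.exists_fin' R M).choose_spec.choose_spec

abbrev FGM (R : Type u) [CommRing R] := {M : ModuleCat.{u} R // Module.Finite R M}

def fgSyz {R : Type u} [CommRing R] [IsNoetherianRing R] (M : FGM R) : FGM R :=
  haveI := M.2
  ⟨ModuleCat.of R (LinearMap.ker (fgCov M.1)), inferInstance⟩

def fgFree {R : Type u} [CommRing R] [IsNoetherianRing R] (M : FGM R) : ModuleCat.{u} R :=
  haveI := M.2
  ModuleCat.of R (Fin (fgRank M.1) → R)

def fgPi {R : Type u} [CommRing R] [IsNoetherianRing R] (M : FGM R) : fgFree M ⟶ M.1 :=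
  haveI := M.2
  ModuleCat.ofHom (fgCov M.1)

def fgInc {R : Type u} [CommRing R] [IsNoetherianRing R] (M : FGM R) : (fgSyz M).1 ⟶ fgFree M :=
  haveI := M.2
  ModuleCat.ofHom (LinearMap.ker (fgCov M.1)).subtype

lemma fgInc_pi {R : Type u} [CommRing R] [IsNoetherianRing R] (M : FGM R) :
    fgInc M ≫ fgPi M = 0 := by
  ext x; exact x.2

lemma fg_exact {R : Type u} [CommRing R] [IsNoetherianRing R] (M : FGM R) :
    (ShortComplex.mk (fgPi (fgSyz M) ≫ fgInc M) (fgPi M) (by simp [fgInc_pi])).Exact := by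
  rw [ShortComplex.moduleCat_exact_iff]
  intro x hx
  have := M.2
  have := (fgSyz M).2
  obtain ⟨y, hy⟩ := fgCov_surj (fgSyz M).1 ⟨x, hx⟩
  exact ⟨y, congrArg Subtype.val hy⟩

instance {R : Type u} [CommRing R] [IsNoetherianRing R] (M : FGM R) : Mono (fgInc M) := by
  rw [ModuleCat.mono_iff_injective]
  exact Subtype.val_injective

instance {R : Type u} [CommRing R] [IsNoetherianRing R] (M : FGM R) : Epi (fgPi M) := by
  rw [ModuleCat.epi_iff_surjective]
  exact @fgCov_surj _ _ M.1 M.2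

instance {R : Type u} [CommRing R] [IsNoetherianRing R] (M : FGM R) :
    Module.Finite R (fgFree M) := by
  unfold fgFree; infer_instance

instance {R : Type u} [CommRing R] [IsNoetherianRing R] (M : FGM R) :
    Module.Projective R (fgFree M) := by
  unfold fgFree; infer_instance

lemma fg_exact' {R : Type u} [CommRing R] [IsNoetherianRing R] (M : FGM R) :
    (ShortComplex.mk (fgPi (fgSyz (fgSyz M)) ≫ fgInc (fgSyz M)) (fgPi (fgSyz M) ≫ fgInc M)
      (by simp [reassoc_of% (fgInc_pi (fgSyz M))])).Exact := by
  let α : ShortComplex.mk (fgPi (fgSyz (fgSyz M)) ≫ fgInc (fgSyz M)) (fgPi (fgSyz M))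
      (by simp [fgInc_pi]) ⟶ 
    ShortComplex.mk (fgPi (fgSyz (fgSyz M)) ≫ fgInc (fgSyz M)) (fgPi (fgSyz M) ≫ fgInc M)
      (by simp [reassoc_of% (fgInc_pi (fgSyz M))]) :=
    { τ₁ := 𝟙 _, τ₂ := 𝟙 _, τ₃ := fgInc M }
  have : Epi α.τ₁ := by dsimp [α]; infer_instance
  have : IsIso α.τ₂ := by dsimp [α]; infer_instance
  have : Mono α.τ₃ := by dsimp [α]; infer_instance
  exact (ShortComplex.exact_iff_of_epi_of_isIso_of_mono α).1 (fg_exact _)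

def fgIter {R : Type u} [CommRing R] [IsNoetherianRing R] (M : FGM R) : ℕ → FGM R
  | 0 => M
  | n+1 => fgSyz (fgIter M n)

def fgComplex {R : Type u} [CommRing R] [IsNoetherianRing R] (M : FGM R) :
    ChainComplex (ModuleCat.{u} R) ℕ :=
  ChainComplex.of (fun n => fgFree (fgIter M n))
    (fun n => fgPi (fgSyz (fgIter M n)) ≫ fgInc (fgIter M n))
    (fun n => by
      change (fgPi (fgSyz (fgSyz (fgIter M n))) ≫ fgInc (fgSyz (fgIter M n))) ≫
        (fgPi (fgSyz (fgIter M n)) ≫ fgInc (fgIter M n)) = 0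
      simp [reassoc_of% (fgInc_pi (fgSyz (fgIter M n)))])

lemma fgComplex_d {R : Type u} [CommRing R] [IsNoetherianRing R] (M : FGM R) (n : ℕ) :
    (fgComplex M).d (n+1) n = fgPi (fgSyz (fgIter M n)) ≫ fgInc (fgIter M n) :=
  ChainComplex.of_d (fun n => fgFree (fgIter M n))
    (fun n => fgPi (fgSyz (fgIter M n)) ≫ fgInc (fgIter M n)) n

lemma quasiIsoAt_zero_of {R : Type u} [CommRing R] (K : ChainComplex (ModuleCat.{u} R) ℕ)
    (M : ModuleCat.{u} R) (π : K ⟶ (ChainComplex.single₀ _).obj M)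
    (h : ∀ w, (ShortComplex.mk (K.d 1 0) (π.f 0) w).Exact) (h2 : Epi (π.f 0)) :
    QuasiIsoAt π 0 := by
  rw [ChainComplex.quasiIsoAt₀_iff, ShortComplex.quasiIso_iff_of_zeros']
  · exact ⟨h _, h2⟩
  · exact K.shape _ _ (by simp)
  all_goals rfl

def fgAug {R : Type u} [CommRing R] [IsNoetherianRing R] (M : FGM R) :
    (fgComplex M).X 0 ⟶ M.1 := fgPi M

lemma fgAug_w {R : Type u} [CommRing R] [IsNoetherianRing R] (M : FGM R) :
    (fgComplex M).d 1 0 ≫ fgAug M = 0 := by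
  rw [fgComplex_d]
  exact (by simp [fgInc_pi] : (fgPi (fgSyz M) ≫ fgInc M) ≫ fgPi M = 0)

lemma fgAug_exact {R : Type u} [CommRing R] [IsNoetherianRing R] (M : FGM R)
    (f : (fgComplex M).X 0 ⟶ M.1) (hf : f = fgAug M) (w) :
    (ShortComplex.mk ((fgComplex M).d 1 0) f w).Exact := by
  subst hf
  have := fg_exact M
  rw [ShortComplex.moduleCat_exact_iff] at this ⊢
  intro x hx
  obtain ⟨y, hy⟩ := this x hx
  refine ⟨y, Eq.trans ?_ hy⟩
  exact congrArg (fun f => f.hom y) (fgComplex_d M 0)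

def fgRes {R : Type u} [CommRing R] [IsNoetherianRing R] (M : FGM R) :
    ProjectiveResolution M.1 where
  complex := fgComplex M
  projective n := (IsProjective.iff_projective (R := R) _).1
    (inferInstanceAs (Module.Projective R (fgFree (fgIter M n))))
  π := (ChainComplex.toSingle₀Equiv _ _).symm ⟨fgAug M, fgAug_w M⟩
  quasiIso := ⟨fun n => by
    cases n with
    | zero =>
      have h := ChainComplex.toSingle₀Equiv_symm_apply_f_zero (fgAug M) (fgAug_w M)
      apply quasiIsoAt_zero_of
      · exact fgAug_exact M _ h
      · have h3 : Epi (fgAug M) := inferInstanceAs (Epi (fgPi M))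
        exact Eq.mpr (congrArg (fun f : (fgComplex M).X 0 ⟶ M.1 => Epi f) h) h3
    | succ n =>
      rw [quasiIsoAt_iff_exactAt']
      · rw [HomologicalComplex.exactAt_iff' _ (n + 1 + 1) (n + 1) n (by simp) (by simp)]
        simp only [HomologicalComplex.sc', HomologicalComplex.shortComplexFunctor', fgComplex_d]
        exact fg_exact' _
      · apply ChainComplex.exactAt_succ_single_obj⟩

lemma exists_fgRes {R : Type u} [CommRing R] [IsNoetherianRing R] (M : ModuleCat.{u} R)
    [hM : Module.Finite R M] : ∃ P : ProjectiveResolution M, ∀ n, Module.Finite R (P.complex.X n) :=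
  ⟨fgRes ⟨M, hM⟩, fun n => inferInstanceAs (Module.Finite R (fgFree (fgIter ⟨M, hM⟩ n)))⟩

section trunc
variable {R : Type u} [CommRing R] (P : ChainComplex (ModuleCat.{u} R) ℕ) (q : ℕ)

def trS (k : ℕ) : Submodule R (P.X k) := if k ≤ q then ⊤ else ⊥

lemma trS_le {k : ℕ} (h : k ≤ q) (x : P.X k) : x ∈ trS P q k := by simp [trS, h]

lemma trS_gt {k : ℕ} (h : ¬ k ≤ q) {x : P.X k} (hx : x ∈ trS P q k) : x = 0 := by
  simpa [trS, h] using hx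

lemma trS_d (i j : ℕ) (x : P.X i) (hx : x ∈ trS P q i) :
    (P.d i j).hom x ∈ trS P q j := by
  by_cases hij : j + 1 = i
  · by_cases hi : i ≤ q
    · exact trS_le P q (by omega) _
    · rw [trS_gt P q hi hx, map_zero]; exact zero_mem _
  · rw [P.shape i j (by simpa using hij)]; exact zero_mem _

def trC : ChainComplex (ModuleCat.{u} R) ℕ where
  X k := ModuleCat.of R (trS P q k)
  d i j := ModuleCat.ofHom ((P.d i j).hom.restrict (trS_d P q i j))
  shape i j h := by
    ext x
    change (P.d i j).hom x.1 = 0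
    rw [P.shape i j h]; rfl
  d_comp_d' i j k _ _ := by
    ext x
    change (P.d i j ≫ P.d j k).hom x.1 = 0
    simp

def trι : trC P q ⟶ P where
  f k := ModuleCat.ofHom (trS P q k).subtype
  comm' i j _ := by ext x; rfl

def trLift (ψ : P ⟶ P) (hψ : ∀ k, ¬ k ≤ q → ψ.f k = 0) : P ⟶ trC P q where
  f k := ModuleCat.ofHom ((ψ.f k).hom.codRestrict (trS P q k) (fun x => by
    by_cases hk : k ≤ q
    · exact trS_le P q hk _
    · rw [hψ k hk]; exact zero_mem _))
  comm' i j _ := by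
    ext x
    apply Subtype.ext
    change (ψ.f i ≫ P.d i j).hom x = (P.d i j ≫ ψ.f j).hom x
    rw [ψ.comm]

lemma trLift_ι (ψ : P ⟶ P) (hψ : ∀ k, ¬ k ≤ q → ψ.f k = 0) : trLift P q ψ hψ ≫ trι P q = ψ := by
  ext k x; rfl

def trψf (r : R) (h : P.X q ⟶ P.X q) (k : ℕ) : P.X k ⟶ P.X k :=
  if hk : k = q then r • 𝟙 _ - eqToHom (by rw [hk]) ≫ h ≫ eqToHom (by rw [hk])
    else if k < q then r • 𝟙 _ else 0

def trψ (r : R) (h : P.X (q+1) ⟶ P.X (q+1)) (h1 : h ≫ P.d (q+1) q = 0)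
    (h2 : P.d (q+2) (q+1) ≫ h = r • P.d (q+2) (q+1)) : P ⟶ P where
  f := trψf P (q+1) r h
  comm' i j hij := by
    obtain rfl : j + 1 = i := hij
    rcases lt_trichotomy j q with hj | rfl | hj
    · simp [trψf, show j ≠ q by omega, hj, show j ≠ q + 1 by omega, show j < q + 1 by omega]
    · simp [trψf, h1]
    · by_cases hj2 : j = q + 1
      · subst hj2
        simp [trψf, h2]
      · simp [trψf, hj2, show ¬ j < q + 1 by omega, show j ≠ q by omega, show ¬ j < q by omega]

lemma trψ_zero (r : R) (h : P.X (q+1) ⟶ P.X (q+1)) (h1) (h2) :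
    (trψ P q r h h1 h2).f 0 = r • 𝟙 _ := by
  simp [trψ, trψf]

lemma trψ_gt (r : R) (h : P.X (q+1) ⟶ P.X (q+1)) (h1) (h2) (k : ℕ) (hk : ¬ k ≤ q + 1) :
    (trψ P q r h h1 h2).f k = 0 := by
  simp [trψ, trψf, show k ≠ q + 1 by omega, show ¬ k < q + 1 by omega]

lemma trC_sub (k : ℕ) (hk : ¬ k ≤ q) : Subsingleton ((trC P q).X k) :=
  ⟨fun x y => Subtype.ext ((trS_gt P q hk x.2).trans (trS_gt P q hk y.2).symm)⟩

lemma trC_fp (hP : ∀ k, Module.Finite R (P.X k) ∧ Module.Projective R (P.X k)) (k : ℕ) :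
    Module.Finite R ((trC P q).X k) ∧ Module.Projective R ((trC P q).X k) := by
  by_cases hk : k ≤ q
  · have e : (P.X k) ≃ₗ[R] ((trC P q).X k) :=
      (Submodule.topEquiv.symm.trans (LinearEquiv.ofEq _ _ (by simp [trS, hk])))
    have := (hP k).1
    have := (hP k).2
    exact ⟨Module.Finite.equiv e, Module.Projective.of_equiv e⟩
  · have := trC_sub P q k hk
    exact ⟨inferInstance, inferInstance⟩

lemma isPerfect_extend (T : ChainComplex (ModuleCat.{u} R) ℕ)
    (hT : ∀ k, Module.Finite R (T.X k) ∧ Module.Projective R (T.X k)) (q : ℕ)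
    (hq : ∀ k, ¬ k ≤ q → Subsingleton (T.X k)) :
    IsPerfect (DerivedCategory.Q.obj (T.extend ComplexShape.embeddingDownNat)) := by
  have hz : ∀ i : ℤ, (∀ k : ℕ, -(k : ℤ) ≠ i) →
      Subsingleton ((T.extend ComplexShape.embeddingDownNat).X i) := fun i hi =>
    ModuleCat.subsingleton_of_isZero
      (HomologicalComplex.isZero_extend_X T ComplexShape.embeddingDownNat i hi)
  refine ⟨_, fun i => ?_, ⟨-q, 0, fun i hi => ?_⟩, ⟨Iso.refl _⟩⟩
  · by_cases h : ∃ k : ℕ, -(k : ℤ) = i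
    · obtain ⟨k, hk⟩ := h
      have e := (HomologicalComplex.extendXIso T ComplexShape.embeddingDownNat hk).symm.toLinearEquiv
      have := (hT k).1
      have := (hT k).2
      exact ⟨Module.Finite.equiv e, Module.Projective.of_equiv e⟩
    · have := hz i (by simpa using h)
      exact ⟨inferInstance, inferInstance⟩
  · by_cases h : ∃ k : ℕ, -(k : ℤ) = i
    · obtain ⟨k, hk⟩ := h
      have e := (HomologicalComplex.extendXIso T ComplexShape.embeddingDownNat hk).toLinearEquiv
      have := hq k (by omega)
      exact e.injective.subsingleton
    · exact hz i (by simpa using h)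

end trunc

lemma smul_id_comm_aux {R : Type u} [CommRing R] {A B : ModuleCat.{u} R} (r : R) (f : A ⟶ B) :
    (r • 𝟙 A) ≫ f = f ≫ (r • 𝟙 B) := by simp

lemma factor_of_h {R : Type u} [CommRing R] {M : ModuleCat.{u} R} (P : ProjectiveResolution M)
    (hP : ∀ k, Module.Finite R (P.complex.X k)) (r : R) (q : ℕ)
    (h : P.complex.X (q+1) ⟶ P.complex.X (q+1)) (h1 : h ≫ P.complex.d (q+1) q = 0)
    (h2 : P.complex.d (q+2) (q+1) ≫ h = r • P.complex.d (q+2) (q+1)) :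
    ∃ P : DerivedCategory (ModuleCat.{u} R), IsPerfect P ∧
      ∃ (f : (DerivedCategory.singleFunctor (ModuleCat.{u} R) 0).obj M ⟶ P)
        (g : P ⟶ (DerivedCategory.singleFunctor (ModuleCat.{u} R) 0).obj M),
        f ≫ g = (DerivedCategory.singleFunctor (ModuleCat.{u} R) 0).map (r • 𝟙 M) := by
  have hP' : ∀ k, Module.Finite R (P.complex.X k) ∧ Module.Projective R (P.complex.X k) :=
    fun k => ⟨hP k, (IsProjective.iff_projective (R := R) _).2 (P.projective k)⟩
  let φ := trLift P.complex (q+1) (trψ P.complex q r h h1 h2) (trψ_gt P.complex q r h h1 h2)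
  let ι := trι P.complex (q+1)
  let H : ProjectiveResolution.Hom P P (r • 𝟙 M) :=
    { hom := φ ≫ ι
      hom_f_zero_comp_π_f_zero := by
        rw [trLift_ι, trψ_zero]
        exact smul_id_comm_aux r (P.π.f 0) }
  let E := ComplexShape.embeddingDownNat
  have key : ∃ (φ' : P.cochainComplex ⟶ (trC P.complex (q+1)).extend E)
      (ι' : (trC P.complex (q+1)).extend E ⟶ P.cochainComplex), φ' ≫ ι' ≫ P.π' =
      P.π' ≫ (CochainComplex.singleFunctor _ 0).map (r • 𝟙 M) := by
    refine ⟨HomologicalComplex.extendMap φ E, HomologicalComplex.extendMap ι E, ?_⟩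
    rw [← H.hom'_comp_π']
    have := HomologicalComplex.extendMap_comp φ ι E
    exact (Category.assoc _ _ _).symm.trans (congrArg (fun f => f ≫ P.π') this.symm)
  obtain ⟨φ', ι', key⟩ := key
  refine ⟨_, isPerfect_extend (trC P.complex (q+1)) (trC_fp _ _ hP') (q+1) (trC_sub _ _),
    (DerivedCategory.singleFunctorIsoCompQ (ModuleCat.{u} R) 0).hom.app M ≫
      inv (DerivedCategory.Q.map P.π') ≫ DerivedCategory.Q.map φ',
    DerivedCategory.Q.map ι' ≫ DerivedCategory.Q.map P.π' ≫
      (DerivedCategory.singleFunctorIsoCompQ (ModuleCat.{u} R) 0).inv.app M, ?_⟩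
  have key2 := congrArg DerivedCategory.Q.map key
  simp only [Functor.map_comp] at key2
  simp only [Category.assoc]
  have nat := (DerivedCategory.singleFunctorIsoCompQ (ModuleCat.{u} R) 0).inv.naturality (r • 𝟙 M)
  dsimp only [Functor.comp_map] at nat
  rw [reassoc_of% key2, IsIso.inv_hom_id_assoc]
  rw [nat, Iso.hom_inv_id_app_assoc]

lemma ca_sub {R : Type u} [CommRing R] [IsNoetherianRing R]
    (M : ModuleCat.{u} R) [Module.Finite R M] (r : R) (hr : r ∈ ca R M) :
    ∃ P : DerivedCategory (ModuleCat.{u} R), IsPerfect P ∧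
      ∃ (f : (DerivedCategory.singleFunctor (ModuleCat.{u} R) 0).obj M ⟶ P)
        (g : P ⟶ (DerivedCategory.singleFunctor (ModuleCat.{u} R) 0).obj M),
        f ≫ g = (DerivedCategory.singleFunctor (ModuleCat.{u} R) 0).map (r • 𝟙 M) := by
  obtain ⟨q, hq⟩ := Set.mem_iUnion.1 hr
  obtain ⟨P, hP⟩ := exists_fgRes M
  have := hP (q+1)
  let Kr := LinearMap.ker (P.complex.d (q+1) q).hom
  have hd : ∀ x, (P.complex.d (q+2) (q+1)).hom x ∈ Kr := fun x => by
    change (P.complex.d (q+2) (q+1) ≫ P.complex.d (q+1) q).hom x = 0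
    simp
  let N := ModuleCat.of R Kr
  have hN : Module.Finite R N := inferInstanceAs (Module.Finite R Kr)
  let c : P.complex.X (q+2) ⟶ N :=
    ModuleCat.ofHom ((P.complex.d (q+2) (q+1)).hom.codRestrict Kr hd)
  obtain ⟨h, hh⟩ := (ext_ann_iff P r (q+1)).1 (hq (q+1+1) (by omega) N hN) c (by
    ext x
    change (P.complex.d (q+3) (q+2) ≫ P.complex.d (q+2) (q+1)).hom x = 0
    simp)
  refine factor_of_h P hP r q (h ≫ ModuleCat.ofHom Kr.subtype) ?_ ?_
  · ext x
    exact (h.hom x).2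
  · rw [← Category.assoc, hh]
    rfl

lemma Q_hom_zero {R : Type u} [CommRing R] (K L : CochainComplex (ModuleCat.{u} R) ℤ)
    [K.IsKProjective] (h0 : ∀ f : K ⟶ L, f = 0)
    (f : DerivedCategory.Q.obj K ⟶ DerivedCategory.Q.obj L) : f = 0 := by
  obtain ⟨g, hg⟩ := (CochainComplex.IsKProjective.Qh_map_bijective K
    ((HomotopyCategory.quotient _ _).obj L)).surjective
    ((DerivedCategory.quotientCompQhIso _).hom.app K ≫ f ≫
      (DerivedCategory.quotientCompQhIso _).inv.app L)
  obtain ⟨g', rfl⟩ := (HomotopyCategory.quotient _ _).map_surjective g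
  rw [h0 g', Functor.map_zero, Functor.map_zero] at hg
  have h2 := hg.symm
  rw [← cancel_epi ((DerivedCategory.quotientCompQhIso _).hom.app K),
    ← cancel_mono ((DerivedCategory.quotientCompQhIso _).inv.app L), Category.assoc, h2]
  simp

lemma perfect_hom_zero {R : Type u} [CommRing R] (P : DerivedCategory (ModuleCat.{u} R))
    (hP : IsPerfect P) : ∃ n₀ : ℕ, ∀ n : ℕ, n₀ ≤ n → ∀ (N : ModuleCat.{u} R)
      (f : P ⟶ ((DerivedCategory.singleFunctor (ModuleCat.{u} R) 0).obj N)⟦(n : ℤ)⟧), f = 0 := by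
  obtain ⟨K, hK, ⟨a, b, hab⟩, ⟨e⟩⟩ := hP
  have : K.IsStrictlyLE b := by
    rw [CochainComplex.isStrictlyLE_iff]
    intro i hi
    have := hab i (Or.inr hi)
    exact ModuleCat.isZero_of_subsingleton _
  have : ∀ i, Projective (K.X i) := fun i =>
    (IsProjective.iff_projective (R := R) _).1 (hK i).2
  have : K.IsKProjective := CochainComplex.isKProjective_of_projective K b
  refine ⟨(-a).toNat + 1, fun n hn N f => ?_⟩
  let e2 : DerivedCategory.Q.obj (((CochainComplex.singleFunctor (ModuleCat.{u} R) 0).obj N)⟦(n:ℤ)⟧) ≅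
      ((DerivedCategory.singleFunctor (ModuleCat.{u} R) 0).obj N)⟦(n : ℤ)⟧ :=
    (DerivedCategory.Q.commShiftIso (n:ℤ)).app _ ≪≫ (shiftFunctor _ (n:ℤ)).mapIso
      ((DerivedCategory.singleFunctorIsoCompQ (ModuleCat.{u} R) 0).symm.app N)
  have h0 := Q_hom_zero K (((CochainComplex.singleFunctor (ModuleCat.{u} R) 0).obj N)⟦(n:ℤ)⟧) (by
    intro g
    ext1 i
    by_cases hi : i < a
    · have := hab i (Or.inl hi)
      exact (ModuleCat.isZero_of_subsingleton (K.X i)).eq_of_src _ _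
    · refine IsZero.eq_of_tgt ?_ _ _
      exact HomologicalComplex.isZero_single_obj_X (ComplexShape.up ℤ) 0 N (i + n) (by omega))
    (e.hom ≫ f ≫ e2.inv)
  rw [← cancel_epi e.hom, ← cancel_mono e2.inv, Category.assoc, h0]
  simp

lemma ca_sup {R : Type u} [CommRing R] [IsNoetherianRing R]
    (M : ModuleCat.{u} R) [Module.Finite R M] (r : R)
    (hr : ∃ P : DerivedCategory (ModuleCat.{u} R), IsPerfect P ∧
      ∃ (f : (DerivedCategory.singleFunctor (ModuleCat.{u} R) 0).obj M ⟶ P)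
        (g : P ⟶ (DerivedCategory.singleFunctor (ModuleCat.{u} R) 0).obj M),
        f ≫ g = (DerivedCategory.singleFunctor (ModuleCat.{u} R) 0).map (r • 𝟙 M)) :
    r ∈ ca R M := by
  obtain ⟨X, hX, f, g, hfg⟩ := hr
  obtain ⟨n₀, hn₀⟩ := perfect_hom_zero X hX
  obtain ⟨P, -⟩ := exists_fgRes M
  refine Set.mem_iUnion.2 ⟨n₀ + 1, ?_⟩
  intro i hi N _
  obtain ⟨p, rfl⟩ : ∃ p, i = p + 1 := ⟨i - 1, by omega⟩
  refine (ext_ann_iff P r p).2 fun c hc => ?_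
  let H : ProjectiveResolution.Hom P P (r • 𝟙 M) :=
    { hom := r • 𝟙 _
      hom_f_zero_comp_π_f_zero := smul_id_comm_aux r (P.π.f 0) }
  have h1 := ProjectiveResolution.mk₀_comp_extMk c (p+2) rfl hc H
  have h2 : (Abelian.Ext.mk₀ (r • 𝟙 M)).comp (P.extMk c (p+2) rfl hc) (zero_add _) = 0 := by
    ext
    rw [Abelian.Ext.comp_hom, Abelian.Ext.mk₀_hom, ShiftedHom.mk₀_comp, ← hfg, Category.assoc,
      hn₀ (p+1) (by omega) N (g ≫ _)]
    simp
  rw [h2] at h1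
  obtain ⟨h, hh⟩ := (P.extMk_eq_zero_iff _ _ _ _ p rfl).1 h1.symm
  refine ⟨h, hh.trans ?_⟩
  simp [H]

/-- `ca_R(M)` equals the annihilator of `M` in the singularity
category: `r · id_M` vanishes in `D_sg(R)`, i.e. `r · id_M` factors through a
perfect complex in the bounded derived category. -/
theorem stmt7 (R : Type u) [CommRing R] [IsNoetherianRing R]
    (M : ModuleCat.{u} R) [Module.Finite R M] :
    ca R M = {r : R | ∃ P : DerivedCategory (ModuleCat.{u} R), IsPerfect P ∧
      ∃ (f : (DerivedCategory.singleFunctor (ModuleCat.{u} R) 0).obj M ⟶ P)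
        (g : P ⟶ (DerivedCategory.singleFunctor (ModuleCat.{u} R) 0).obj M),
        f ≫ g = (DerivedCategory.singleFunctor (ModuleCat.{u} R) 0).map (r • 𝟙 M)} := by
  ext r
  exact ⟨ca_sub M r, ca_sup M r⟩

end
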